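/- arXiv:2502.11033 — 2 statements merged into one kernel-verified Lean document; each statement's English description precedes it below -/
import Mathlib

section
/- Generic closure implies VGD: let Π be a policy class, π ∈ Π a policy, and v ∈ Δ(S × A) a state-action probability measure with v(s,a) > 0 for all (s,a). Let π⋆ := argmin over all policies in Δ(A)^S of V, and μ⋆ := μ^{π⋆}. Suppose there exist π⁺ ∈ Π and Q̂^π ∈ ℝ^{S×A} such that: (i) E_{s∼μ^π} ⟨Q̂^π_s, π⁺_s⟩ ≤ E_{s∼μ^π} min_a Q̂^π_{s,a} + ε_greedy; (ii) E_{s,a∼v}[(Q̂^π_{s,a} − Q^π_{s,a})²] ≤ ε_approx; (iii) E_{s,a∼v}[(μ̃(s) π̃_{s,a} / v(s,a))²] ≤ C_v for every π̃ ∈ {π, π⁺, π⋆} and μ̃ ∈ {μ^π, μ⋆}. Then V(π) − V⋆ ≤ ‖μ⋆/μ^π‖_∞ · max_{π̃∈Π} ⟨∇V(π), π − π̃⟩ + H ‖μ⋆/μ^π‖_∞ (ε_greedy + 4√(C_v ε_approx)), where V⋆ := V(π⋆) and ‖μ⋆/μ^π‖_∞ := max_s μ⋆(s)/μ^π(s).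 -/
open scoped BigOperators Classical

noncomputable section

/-- A discounted MDP with finite state space `S` and finite action set `A`.
`r` is interpreted as a cost in `[0,1]`. -/
structure MDP (S A : Type) [Fintype S] [Fintype A] where
  P : S → A → S → ℝ
  P_nonneg : ∀ s a s', 0 ≤ P s a s'
  P_sum_one : ∀ s a, ∑ s', P s a s' = 1
  r : S → A → ℝ
  r_nonneg : ∀ s a, 0 ≤ r s a
  r_le_one : ∀ s a, r s a ≤ 1
  gamma : ℝ
  gamma_pos : 0 < gamma
  gamma_lt_one : gamma < 1
  rho0 : S → ℝ
  rho0_nonneg : ∀ s, 0 ≤ rho0 s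
  rho0_sum_one : ∑ s, rho0 s = 1

variable {S A : Type} [Fintype S] [Fintype A]

/-- `π` is a policy: a probability distribution over actions at every state. -/
def IsPolicy (π : S → A → ℝ) : Prop :=
  (∀ s a, 0 ≤ π s a) ∧ ∀ s, ∑ a, π s a = 1

namespace MDP

/-- Effective horizon `H = 1/(1-γ)`. -/
def horizon (M : MDP S A) : ℝ := 1 / (1 - M.gamma)

/-- One-step evolution of a state distribution under policy `π`. -/
def stepDist (M : MDP S A) (π : S → A → ℝ) (d : S → ℝ) : S → ℝ :=
  fun s' => ∑ s, ∑ a, d s * π s a * M.P s a s'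

/-- State distribution at time `t` under `π` with start distribution `ρ`. -/
def distAt (M : MDP S A) (π : S → A → ℝ) (ρ : S → ℝ) (t : ℕ) : S → ℝ :=
  (M.stepDist π)^[t] ρ

/-- Expected one-step cost under state distribution `d` and policy `π`. -/
def expCost (M : MDP S A) (π : S → A → ℝ) (d : S → ℝ) : ℝ :=
  ∑ s, ∑ a, d s * π s a * M.r s a

/-- Discounted value `V_ρ(π) = Σ_t γ^t E[r(s_t,a_t)]` with start-state distribution `ρ`. -/
def valueFrom (M : MDP S A) (π : S → A → ℝ) (ρ : S → ℝ) : ℝ :=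
  ∑' t : ℕ, M.gamma ^ t * M.expCost π (M.distAt π ρ t)

/-- Value starting from state `s`. -/
def valueAt (M : MDP S A) (π : S → A → ℝ) (s : S) : ℝ :=
  M.valueFrom π (fun s' => if s' = s then 1 else 0)

/-- Value from the initial state distribution `ρ0`. -/
def value (M : MDP S A) (π : S → A → ℝ) : ℝ := M.valueFrom π M.rho0

/-- Action-value (Q) function. -/
def Qfun (M : MDP S A) (π : S → A → ℝ) (s : S) (a : A) : ℝ :=
  M.r s a + M.gamma * ∑ s', M.P s a s' * M.valueAt π s'

/-- Discounted state-occupancy measure with start distribution `ρ`. -/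
def occFrom (M : MDP S A) (π : S → A → ℝ) (ρ : S → ℝ) (s : S) : ℝ :=
  (1 - M.gamma) * ∑' t : ℕ, M.gamma ^ t * M.distAt π ρ t s

/-- Discounted state-occupancy measure from the initial distribution. -/
def occ (M : MDP S A) (π : S → A → ℝ) : S → ℝ := M.occFrom π M.rho0

/-- Policy gradient in the direct parametrization:
`(∇V(π))_{s,a} = H μ^π(s) Q^π_{s,a}` (policy gradient theorem). -/
def gradV (M : MDP S A) (π : S → A → ℝ) : S → A → ℝ :=
  fun s a => M.horizon * M.occ π s * M.Qfun π s a

end MDP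

/-- Inner product on `ℝ^A`. -/
def innerA (u v : A → ℝ) : ℝ := ∑ a, u a * v a

/-- Inner product on `ℝ^{S×A}`. -/
def innerSA (u v : S → A → ℝ) : ℝ := ∑ s, ∑ a, u s a * v s a

/-- `PC` satisfies `(C, eps)`-variational gradient dominance w.r.t. `M`. -/
def IsVGD (M : MDP S A) (PC : Set (S → A → ℝ)) (C eps : ℝ) : Prop :=
  ∀ π ∈ PC, M.value π - sInf (M.value '' PC) ≤
    C * sSup ((fun π' => innerSA (M.gradV π) (fun s a => π s a - π' s a)) '' PC) + eps

/-- The ε-greedy exploratory class `Π^ε = {(1-ε)π + ε·u : π ∈ Π}`, `u` uniform. -/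
def greedyClass (PC : Set (S → A → ℝ)) (ε : ℝ) : Set (S → A → ℝ) :=
  (fun π => fun s a => (1 - ε) * π s a + ε / (Fintype.card A : ℝ)) '' PC

/-- Weighted norm `‖u‖_{L²(μ),1} = √(E_{s∼μ} ‖u_s‖₁²)`. -/
def wnorm1 (μ : S → ℝ) (u : S → A → ℝ) : ℝ :=
  Real.sqrt (∑ s, μ s * (∑ a, |u s a|) ^ 2)

/-- Weighted norm `‖u‖_{L²(μ),2} = √(E_{s∼μ} ‖u_s‖₂²)`. -/
def wnorm2 (μ : S → ℝ) (u : S → A → ℝ) : ℝ :=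
  Real.sqrt (∑ s, μ s * ∑ a, (u s a) ^ 2)

/-- `N` is a norm on `ℝ^A`. -/
def IsNormA (N : (A → ℝ) → ℝ) : Prop :=
  (∀ x, 0 ≤ N x) ∧ (∀ x, N x = 0 ↔ x = 0) ∧
    (∀ (c : ℝ) (x : A → ℝ), N (c • x) = |c| * N x) ∧ ∀ x y, N (x + y) ≤ N x + N y

/-- Dual norm of a norm `N` on `ℝ^A`. -/
def dualNormA (N : (A → ℝ) → ℝ) (z : A → ℝ) : ℝ :=
  sSup ((fun u => innerA z u) '' {u | N u ≤ 1})

/-- Weighted norm `‖u‖_{L²(μ),∘} = √(E_{s∼μ} ‖u_s‖∘²)` for an action-space norm `N`. -/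
def wnormN (μ : S → ℝ) (N : (A → ℝ) → ℝ) (u : S → A → ℝ) : ℝ :=
  Real.sqrt (∑ s, μ s * (N (u s)) ^ 2)

/-- Bregman divergence on `ℝ^A` of `R` whose gradient is `gR`. -/
def bregA (R : (A → ℝ) → ℝ) (gR : (A → ℝ) → A → ℝ) (u v : A → ℝ) : ℝ :=
  R u - R v - innerA (gR v) (u - v)

/-- The probability simplex `Δ(B)`. -/
def simplexA (B : Type) [Fintype B] : Set (B → ℝ) :=
  {p | (∀ b, 0 ≤ p b) ∧ ∑ b, p b = 1}

/-!
The performance difference lemma writes `V(π) - V(π')` as `H` times the `μ^{π'}`-average of the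
advantage `⟨Q^π_s, π_s - π'_s⟩`. Cauchy–Schwarz in `L²(v)` bounds by `√(C_v ε_approx)` the cost of
replacing `Q^π` by `Q̂` in an average over states and actions. For `Q̂`, the advantage over `π'` is
at most the pointwise nonnegative greedy gap `⟨Q̂_s, π_s⟩ - min_a Q̂_{s,a}`, so passing from
`μ^{π'}` to `μ^π` costs only the factor `‖μ^{π'}/μ^π‖_∞`; under `μ^π` the greedy gap is, up to
`ε_greedy`, the advantage over `π⁺`, that is, `⟨∇V(π), π - π⁺⟩ / H` after returning to `Q^π`.

For the performance difference lemma, let `K` be the transition matrix of `π`. Shifting the series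
that defines the occupancy measure gives `H ⟨μ, f - γ K f⟩ = ⟨ρ, f⟩` for all `f` and `ρ`. Hence
`1 - γ K` is injective, so it is surjective, and the solution of `f - γ K f = r^π` must be `V^π`.
-/

/-- The policy average `s ↦ ⟨q_s, π_s⟩` of a state-action function `q`. The second argument need
not be a policy, so that `policyMean q (π - π')` is the advantage of `π` over `π'` measured by
`q`. -/
def policyMean (q π : S → A → ℝ) (s : S) : ℝ := innerA (q s) (π s)

omit [Fintype S] in
lemma policyMean_sub_left (q q' π : S → A → ℝ) :
    policyMean (q - q') π = policyMean q π - policyMean q' π :=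
  funext fun s => sub_dotProduct (q s) (q' s) (π s)

omit [Fintype S] in
lemma policyMean_sub_right (q π π' : S → A → ℝ) :
    policyMean q (π - π') = policyMean q π - policyMean q π' :=
  funext fun s => dotProduct_sub (q s) (π s) (π' s)

omit [Fintype S] in
lemma IsPolicy.apply_mem_simplexA {π : S → A → ℝ} (hπ : IsPolicy π) (s : S) :
    π s ∈ simplexA A :=
  ⟨hπ.1 s, hπ.2 s⟩

lemma bddAbove_innerSA_sub_image {PC : Set (S → A → ℝ)} (hPC : ∀ π' ∈ PC, IsPolicy π')
    (g π : S → A → ℝ) :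
    BddAbove ((fun π' => innerSA g (fun s a => π s a - π' s a)) '' PC) := by
  have hcompact : IsCompact (Set.univ.pi fun _ : S => stdSimplex ℝ A) :=
    isCompact_univ_pi fun _ => isCompact_stdSimplex ℝ A
  have hcont : Continuous fun π' : S → A → ℝ => innerSA g (fun s a => π s a - π' s a) := by
    unfold innerSA
    fun_prop
  have hsub : PC ⊆ Set.univ.pi fun _ : S => stdSimplex ℝ A :=
    fun π' hπ' s _ => (hPC π' hπ').apply_mem_simplexA s
  exact (hcompact.image hcont).bddAbove.mono (Set.image_mono hsub)

namespace MDP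

open Matrix

variable (M : MDP S A) {π π' : S → A → ℝ}

/-- The state-to-state transition matrix of the Markov chain that the policy `π` induces. -/
def transitionMatrix (π : S → A → ℝ) : Matrix S S ℝ :=
  of fun s s' => ∑ a, π s a * M.P s a s'

lemma transitionMatrix_mem_rowStochastic (hπ : IsPolicy π) :
    M.transitionMatrix π ∈ rowStochastic ℝ S := by
  refine mem_rowStochastic_iff_sum.2 ⟨fun s s' => ?_, fun s => ?_⟩
  · exact Finset.sum_nonneg fun a _ => mul_nonneg (hπ.1 s a) (M.P_nonneg s a s')
  · simp only [transitionMatrix, of_apply]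
    rw [Finset.sum_comm]
    simp only [← Finset.mul_sum, M.P_sum_one, mul_one, hπ.2]

lemma stepDist_eq_vecMul (π : S → A → ℝ) (d : S → ℝ) :
    M.stepDist π d = d ᵥ* M.transitionMatrix π := by
  ext s'
  simp only [stepDist, vecMul, dotProduct, transitionMatrix, of_apply, Finset.mul_sum, mul_assoc]

lemma distAt_eq_vecMul_pow (π : S → A → ℝ) (ρ : S → ℝ) (t : ℕ) :
    M.distAt π ρ t = ρ ᵥ* M.transitionMatrix π ^ t := by
  induction t with
  | zero => simp [distAt]
  | succ t ih =>
    rw [distAt, Function.iterate_succ_apply', ← distAt, ih, stepDist_eq_vecMul, vecMul_vecMul,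
      pow_succ]

lemma distAt_nonneg (hπ : IsPolicy π) {ρ : S → ℝ} (hρ : ∀ s, 0 ≤ ρ s) (t : ℕ) (s : S) :
    0 ≤ M.distAt π ρ t s := by
  rw [distAt_eq_vecMul_pow]
  exact nonneg_vecMul_of_mem_rowStochastic
    (pow_mem (M.transitionMatrix_mem_rowStochastic hπ) t) hρ s

lemma abs_distAt_le (hπ : IsPolicy π) (ρ : S → ℝ) (t : ℕ) (s : S) :
    |M.distAt π ρ t s| ≤ ∑ s', |ρ s'| := by
  have hK := pow_mem (M.transitionMatrix_mem_rowStochastic hπ) t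
  rw [distAt_eq_vecMul_pow]
  refine (Finset.abs_sum_le_sum_abs _ _).trans (Finset.sum_le_sum fun s' _ => ?_)
  rw [abs_mul, abs_of_nonneg (nonneg_of_mem_rowStochastic hK)]
  exact mul_le_of_le_one_right (abs_nonneg _) (le_one_of_mem_rowStochastic hK)

lemma summable_pow_mul_distAt (hπ : IsPolicy π) (ρ : S → ℝ) (s : S) :
    Summable fun t : ℕ => M.gamma ^ t * M.distAt π ρ t s := by
  refine .of_norm_bounded
    ((summable_geometric_of_lt_one M.gamma_pos.le M.gamma_lt_one).mul_right (∑ s', |ρ s'|))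
    fun t => ?_
  have hpow : 0 ≤ M.gamma ^ t := pow_nonneg M.gamma_pos.le t
  rw [Real.norm_eq_abs, abs_mul, abs_of_nonneg hpow]
  exact mul_le_mul_of_nonneg_left (M.abs_distAt_le hπ ρ t s) hpow

lemma one_sub_gamma_pos : 0 < 1 - M.gamma := sub_pos.2 M.gamma_lt_one

lemma horizon_pos : 0 < M.horizon := one_div_pos.2 M.one_sub_gamma_pos

lemma horizon_mul_one_sub_gamma : M.horizon * (1 - M.gamma) = 1 :=
  one_div_mul_cancel M.one_sub_gamma_pos.ne'

lemma horizon_mul_occFrom (π : S → A → ℝ) (ρ : S → ℝ) (s : S) :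
    M.horizon * M.occFrom π ρ s = ∑' t : ℕ, M.gamma ^ t * M.distAt π ρ t s := by
  rw [occFrom, ← mul_assoc, horizon_mul_one_sub_gamma, one_mul]

lemma hasSum_pow_mul_distAt_dotProduct (hπ : IsPolicy π) (ρ f : S → ℝ) :
    HasSum (fun t : ℕ => M.gamma ^ t * (M.distAt π ρ t ⬝ᵥ f))
      (M.horizon * (M.occFrom π ρ ⬝ᵥ f)) := by
  simp only [dotProduct, Finset.mul_sum, ← mul_assoc, horizon_mul_occFrom]
  exact hasSum_sum fun s _ => (M.summable_pow_mul_distAt hπ ρ s).hasSum.mul_right (f s)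

lemma horizon_mul_occFrom_dotProduct_sub (hπ : IsPolicy π) (ρ f : S → ℝ) :
    M.horizon * (M.occFrom π ρ ⬝ᵥ (f - M.gamma • M.transitionMatrix π *ᵥ f)) = ρ ⬝ᵥ f := by
  have hf := M.hasSum_pow_mul_distAt_dotProduct hπ ρ f
  have hKf := (M.hasSum_pow_mul_distAt_dotProduct hπ ρ (M.transitionMatrix π *ᵥ f)).mul_left
    M.gamma
  have hshift : ∀ t : ℕ, M.gamma ^ (t + 1) * (M.distAt π ρ (t + 1) ⬝ᵥ f) =
      M.gamma * (M.gamma ^ t * (M.distAt π ρ t ⬝ᵥ M.transitionMatrix π *ᵥ f)) := fun t => by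
    rw [dotProduct_mulVec, distAt_eq_vecMul_pow, distAt_eq_vecMul_pow, vecMul_vecMul,
      ← pow_succ, pow_succ', mul_assoc]
  have hsplit := hf.summable.tsum_eq_zero_add
  simp only [hshift, hf.tsum_eq, hKf.tsum_eq] at hsplit
  rw [dotProduct_sub, dotProduct_smul, smul_eq_mul, mul_sub, mul_left_comm, hsplit,
    add_sub_cancel_right, pow_zero, one_mul, distAt, Function.iterate_zero, id]

lemma sum_occFrom (hπ : IsPolicy π) (ρ : S → ℝ) : ∑ s, M.occFrom π ρ s = ∑ s, ρ s := by
  have hflow := M.horizon_mul_occFrom_dotProduct_sub hπ ρ 1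
  rwa [one_vecMul_of_mem_rowStochastic (M.transitionMatrix_mem_rowStochastic hπ),
    dotProduct_sub, dotProduct_smul, dotProduct_one, dotProduct_one, smul_eq_mul,
    ← one_sub_mul, ← mul_assoc, horizon_mul_one_sub_gamma, one_mul] at hflow

lemma sum_occ (hπ : IsPolicy π) : ∑ s, M.occ π s = 1 :=
  (M.sum_occFrom hπ M.rho0).trans M.rho0_sum_one

lemma occ_nonneg (hπ : IsPolicy π) (s : S) : 0 ≤ M.occ π s :=
  mul_nonneg M.one_sub_gamma_pos.le <| tsum_nonneg fun t =>
    mul_nonneg (pow_nonneg M.gamma_pos.le t) (M.distAt_nonneg hπ M.rho0_nonneg t s)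

lemma expCost_eq_dotProduct (π : S → A → ℝ) (d : S → ℝ) :
    M.expCost π d = d ⬝ᵥ policyMean M.r π := by
  simp only [expCost, dotProduct, policyMean, innerA, Finset.mul_sum, mul_assoc,
    mul_comm (π _ _)]

lemma valueFrom_eq_occFrom_dotProduct (hπ : IsPolicy π) (ρ : S → ℝ) :
    M.valueFrom π ρ = M.horizon * (M.occFrom π ρ ⬝ᵥ policyMean M.r π) := by
  simp only [valueFrom, expCost_eq_dotProduct]
  exact (M.hasSum_pow_mul_distAt_dotProduct hπ ρ _).tsum_eq

lemma exists_sub_gamma_smul_mulVec_eq (hπ : IsPolicy π) (c : S → ℝ) :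
    ∃ f, f - M.gamma • M.transitionMatrix π *ᵥ f = c := by
  let L : (S → ℝ) →ₗ[ℝ] (S → ℝ) := .id - M.gamma • (M.transitionMatrix π).mulVecLin
  have hL : Function.Injective L := by
    refine (injective_iff_map_eq_zero L).2 fun f hf => dotProduct_eq_zero f fun ρ => ?_
    have hflow := M.horizon_mul_occFrom_dotProduct_sub hπ ρ f
    rw [show f - M.gamma • M.transitionMatrix π *ᵥ f = 0 from hf, dotProduct_zero, mul_zero]
      at hflow
    rw [dotProduct_comm, ← hflow]
  exact LinearMap.surjective_of_injective hL c

lemma valueFrom_eq_dotProduct_of_sub_eq (hπ : IsPolicy π) {f : S → ℝ}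
    (hf : f - M.gamma • M.transitionMatrix π *ᵥ f = policyMean M.r π) (ρ : S → ℝ) :
    M.valueFrom π ρ = ρ ⬝ᵥ f := by
  rw [M.valueFrom_eq_occFrom_dotProduct hπ, ← hf, M.horizon_mul_occFrom_dotProduct_sub hπ]

lemma valueAt_eq_of_sub_eq (hπ : IsPolicy π) {f : S → ℝ}
    (hf : f - M.gamma • M.transitionMatrix π *ᵥ f = policyMean M.r π) :
    M.valueAt π = f := by
  ext s
  rw [valueAt, M.valueFrom_eq_dotProduct_of_sub_eq hπ hf]
  simp [dotProduct]

lemma valueAt_sub_gamma_smul_mulVec (hπ : IsPolicy π) :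
    M.valueAt π - M.gamma • M.transitionMatrix π *ᵥ M.valueAt π = policyMean M.r π := by
  obtain ⟨f, hf⟩ := M.exists_sub_gamma_smul_mulVec_eq hπ (policyMean M.r π)
  rwa [M.valueAt_eq_of_sub_eq hπ hf]

lemma policyMean_Qfun (π π' : S → A → ℝ) :
    policyMean (M.Qfun π) π' =
      policyMean M.r π' + M.gamma • M.transitionMatrix π' *ᵥ M.valueAt π := by
  ext s
  simp only [policyMean, innerA, Qfun, Pi.add_apply, Pi.smul_apply, smul_eq_mul, mulVec,
    dotProduct, transitionMatrix, of_apply, add_mul, Finset.sum_add_distrib, Finset.sum_mul,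
    Finset.mul_sum]
  rw [Finset.sum_comm (s := (Finset.univ : Finset S))]
  congr! 3
  ring

lemma policyMean_Qfun_self (hπ : IsPolicy π) : policyMean (M.Qfun π) π = M.valueAt π := by
  rw [policyMean_Qfun, ← M.valueAt_sub_gamma_smul_mulVec hπ, sub_add_cancel]

theorem value_sub_value (hπ : IsPolicy π) (hπ' : IsPolicy π') :
    M.value π - M.value π' =
      M.horizon * (M.occ π' ⬝ᵥ policyMean (M.Qfun π) (π - π')) := by
  have hval : M.value π = M.horizon *
      (M.occ π' ⬝ᵥ (M.valueAt π - M.gamma • M.transitionMatrix π' *ᵥ M.valueAt π)) :=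
    (M.valueFrom_eq_dotProduct_of_sub_eq hπ (M.valueAt_sub_gamma_smul_mulVec hπ) M.rho0).trans
      (M.horizon_mul_occFrom_dotProduct_sub hπ' M.rho0 _).symm
  have hval' : M.value π' = M.horizon * (M.occ π' ⬝ᵥ policyMean M.r π') :=
    M.valueFrom_eq_occFrom_dotProduct hπ' M.rho0
  rw [hval, hval', ← mul_sub, ← dotProduct_sub, policyMean_sub_right,
    M.policyMean_Qfun_self hπ, policyMean_Qfun, sub_add_eq_sub_sub_swap]

lemma innerSA_gradV (π u : S → A → ℝ) :
    innerSA (M.gradV π) u = M.horizon * (M.occ π ⬝ᵥ policyMean (M.Qfun π) u) := by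
  simp only [innerSA, gradV, dotProduct, policyMean, innerA, Finset.mul_sum, mul_assoc]

end MDP

lemma abs_sum_mul_le_sqrt_of_weighted_sq_le {ι : Type*} (s : Finset ι) {v w e : ι → ℝ} {C ε : ℝ}
    (hv : ∀ i ∈ s, 0 < v i) (hw : ∑ i ∈ s, v i * (w i / v i) ^ 2 ≤ C)
    (he : ∑ i ∈ s, v i * e i ^ 2 ≤ ε) :
    |∑ i ∈ s, w i * e i| ≤ √(C * ε) := by
  have hw0 : ∀ i ∈ s, 0 ≤ v i * (w i / v i) ^ 2 := fun i hi =>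
    mul_nonneg (hv i hi).le (sq_nonneg _)
  have he0 : ∀ i ∈ s, 0 ≤ v i * e i ^ 2 := fun i hi => mul_nonneg (hv i hi).le (sq_nonneg _)
  refine Real.abs_le_sqrt ?_
  calc (∑ i ∈ s, w i * e i) ^ 2
      ≤ (∑ i ∈ s, v i * (w i / v i) ^ 2) * ∑ i ∈ s, v i * e i ^ 2 :=
        Finset.sum_sq_le_sum_mul_sum_of_sq_le_mul s hw0 he0 fun i hi => by
          have := (hv i hi).ne'
          exact le_of_eq (by field_simp)
    _ ≤ C * ε := mul_le_mul hw he (Finset.sum_nonneg he0) ((Finset.sum_nonneg hw0).trans hw)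

lemma abs_dotProduct_policyMean_le {μ : S → ℝ} {p e v : S → A → ℝ} {C ε : ℝ}
    (hv : ∀ s a, 0 < v s a) (hC : ∑ s, ∑ a, v s a * (μ s * p s a / v s a) ^ 2 ≤ C)
    (hε : ∑ s, ∑ a, v s a * e s a ^ 2 ≤ ε) :
    |μ ⬝ᵥ policyMean e p| ≤ √(C * ε) := by
  have hsum : μ ⬝ᵥ policyMean e p = ∑ i : S × A, μ i.1 * p i.1 i.2 * e i.1 i.2 := by
    simp only [dotProduct, policyMean, innerA, Finset.mul_sum, Fintype.sum_prod_type, mul_assoc,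
      mul_comm (e _ _)]
  rw [hsum]
  rw [← Fintype.sum_prod_type'] at hC hε
  exact abs_sum_mul_le_sqrt_of_weighted_sq_le _ (fun i _ => hv i.1 i.2) hC hε

lemma iInf_le_innerA (q : A → ℝ) {p : A → ℝ} (hp : p ∈ simplexA A) :
    ⨅ a, q a ≤ innerA q p :=
  calc ⨅ a, q a = ∑ a, (⨅ a, q a) * p a := by rw [← Finset.mul_sum, hp.2, mul_one]
    _ ≤ ∑ a, q a * p a := Finset.sum_le_sum fun a _ =>
        mul_le_mul_of_nonneg_right (ciInf_le (Set.finite_range q).bddBelow a) (hp.1 a)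

lemma dotProduct_policyMean_sub_le_mul_greedy_gap {μ μ' : S → ℝ} {p p' : S → A → ℝ} {D : ℝ}
    (hp : IsPolicy p) (hp' : IsPolicy p') (hμ' : ∀ s, 0 ≤ μ' s) (hD : ∀ s, μ' s ≤ D * μ s)
    (q : S → A → ℝ) :
    μ' ⬝ᵥ policyMean q (p - p') ≤ D * (μ ⬝ᵥ (policyMean q p - fun s => ⨅ a, q s a)) := by
  rw [policyMean_sub_right, dotProduct, dotProduct, Finset.mul_sum]
  refine Finset.sum_le_sum fun s _ => ?_
  have hgap : 0 ≤ policyMean q p s - ⨅ a, q s a :=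
    sub_nonneg.2 (iInf_le_innerA (q s) (hp.apply_mem_simplexA s))
  calc μ' s * (policyMean q p s - policyMean q p' s)
      ≤ μ' s * (policyMean q p s - ⨅ a, q s a) :=
        mul_le_mul_of_nonneg_left
          (sub_le_sub_left (iInf_le_innerA (q s) (hp'.apply_mem_simplexA s)) _) (hμ' s)
    _ ≤ D * μ s * (policyMean q p s - ⨅ a, q s a) := mul_le_mul_of_nonneg_right (hD s) hgap
    _ = D * (μ s * (policyMean q p s - ⨅ a, q s a)) := mul_assoc _ _ _

lemma dotProduct_policyMean_sub_le_of_approx_greedy {μ μ' : S → ℝ} {p pplus p' q qhat : S → A → ℝ}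
    {D R ε : ℝ} (hp : IsPolicy p) (hp' : IsPolicy p') (hμ' : ∀ s, 0 ≤ μ' s)
    (hD : ∀ s, μ' s ≤ D * μ s) (hD1 : 1 ≤ D)
    (hgreedy : μ ⬝ᵥ policyMean qhat pplus ≤ (μ ⬝ᵥ fun s => ⨅ a, qhat s a) + ε)
    (hR : ∀ p₁ ∈ ({p, pplus} : Set (S → A → ℝ)), |μ ⬝ᵥ policyMean (qhat - q) p₁| ≤ R)
    (hR' : ∀ p₁ ∈ ({p, p'} : Set (S → A → ℝ)), |μ' ⬝ᵥ policyMean (qhat - q) p₁| ≤ R) :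
    μ' ⬝ᵥ policyMean q (p - p') ≤ D * (μ ⬝ᵥ policyMean q (p - pplus) + (ε + 4 * R)) := by
  have hR0 : 0 ≤ R := (abs_nonneg _).trans (hR p (Set.mem_insert p _))
  have hgap := dotProduct_policyMean_sub_le_mul_greedy_gap hp hp' hμ' hD qhat
  simp only [Set.mem_insert_iff, Set.mem_singleton_iff, forall_eq_or_imp, forall_eq, abs_le,
    policyMean_sub_left, policyMean_sub_right, dotProduct_sub] at hgap hR hR' ⊢
  obtain ⟨⟨-, hp_le⟩, hpplus_ge, -⟩ := hR
  obtain ⟨⟨hp_ge', -⟩, -, hp'_le'⟩ := hR'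
  have hgap_le : μ ⬝ᵥ policyMean qhat p - (μ ⬝ᵥ fun s => ⨅ a, qhat s a) ≤
      μ ⬝ᵥ policyMean q p - μ ⬝ᵥ policyMean q pplus + ε + 2 * R := by linarith
  calc μ' ⬝ᵥ policyMean q p - μ' ⬝ᵥ policyMean q p'
      ≤ μ' ⬝ᵥ policyMean qhat p - μ' ⬝ᵥ policyMean qhat p' + 2 * R := by linarith
    _ ≤ D * (μ ⬝ᵥ policyMean qhat p - (μ ⬝ᵥ fun s => ⨅ a, qhat s a)) + D * (2 * R) :=
        add_le_add hgap (le_mul_of_one_le_left (by positivity) hD1)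
    _ ≤ D * (μ ⬝ᵥ policyMean q p - μ ⬝ᵥ policyMean q pplus + ε + 2 * R) + D * (2 * R) := by
        gcongr
    _ = D * (μ ⬝ᵥ policyMean q p - μ ⬝ᵥ policyMean q pplus + (ε + 4 * R)) := by ring

theorem generic_closure_implies_vgd_general
    (M : MDP S A) (PC : Set (S → A → ℝ)) (π πplus πref : S → A → ℝ)
    (v : S → A → ℝ) (Qhat : S → A → ℝ) (epsgreedy epsapprox Cv : ℝ)
    (hpol : ∀ π' ∈ PC, IsPolicy π') (hπ : IsPolicy π) (hπplus : πplus ∈ PC)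
    (href : IsPolicy πref) (hv : ∀ s a, 0 < v s a) (hocc : ∀ s, 0 < M.occ π s)
    (hgreedy : ∑ s, M.occ π s * innerA (Qhat s) (πplus s) ≤
      ∑ s, M.occ π s * (⨅ a, Qhat s a) + epsgreedy)
    (happrox : ∑ s, ∑ a, v s a * (Qhat s a - M.Qfun π s a) ^ 2 ≤ epsapprox)
    (hconc : ∀ πt ∈ ({π, πplus} : Set (S → A → ℝ)),
      ∑ s, ∑ a, v s a * (M.occ π s * πt s a / v s a) ^ 2 ≤ Cv)
    (hconc_ref : ∀ πt ∈ ({π, πref} : Set (S → A → ℝ)),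
      ∑ s, ∑ a, v s a * (M.occ πref s * πt s a / v s a) ^ 2 ≤ Cv) :
    M.value π - M.value πref ≤
      (⨆ s, M.occ πref s / M.occ π s) *
          sSup ((fun πt => innerSA (M.gradV π)
            (fun s a => π s a - πt s a)) '' PC) +
        M.horizon * (⨆ s, M.occ πref s / M.occ π s) *
          (epsgreedy + 4 * Real.sqrt (Cv * epsapprox)) := by
  set D := ⨆ s, M.occ πref s / M.occ π s
  have hD : ∀ s, M.occ πref s ≤ D * M.occ π s := fun s => (div_le_iff₀ (hocc s)).1 <|
    le_ciSup (f := fun s => M.occ πref s / M.occ π s) (Set.finite_range _).bddAbove s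
  have hD1 : 1 ≤ D := by
    simpa only [← Finset.mul_sum, M.sum_occ hπ, M.sum_occ href, mul_one] using
      Finset.sum_le_sum fun s (_ : s ∈ Finset.univ) => hD s
  have hgrad : M.horizon * (M.occ π ⬝ᵥ policyMean (M.Qfun π) (π - πplus)) ≤
      sSup ((fun πt => innerSA (M.gradV π) (fun s a => π s a - πt s a)) '' PC) := by
    rw [← M.innerSA_gradV]
    exact le_csSup (bddAbove_innerSA_sub_image hpol _ π) ⟨πplus, hπplus, rfl⟩
  have hadv := dotProduct_policyMean_sub_le_of_approx_greedy hπ href (M.occ_nonneg href) hD hD1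
    hgreedy (fun p hp => abs_dotProduct_policyMean_le hv (hconc p hp) happrox)
    (fun p hp => abs_dotProduct_policyMean_le hv (hconc_ref p hp) happrox)
  rw [M.value_sub_value hπ href]
  calc M.horizon * (M.occ πref ⬝ᵥ policyMean (M.Qfun π) (π - πref))
      ≤ M.horizon * (D * (M.occ π ⬝ᵥ policyMean (M.Qfun π) (π - πplus) +
          (epsgreedy + 4 * √(Cv * epsapprox)))) :=
        mul_le_mul_of_nonneg_left hadv M.horizon_pos.le
    _ = D * (M.horizon * (M.occ π ⬝ᵥ policyMean (M.Qfun π) (π - πplus))) +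
          M.horizon * D * (epsgreedy + 4 * √(Cv * epsapprox)) := by ring
    _ ≤ _ := add_le_add_left (mul_le_mul_of_nonneg_left hgrad (zero_le_one.trans hD1)) _

/-- Lemma: generic closure implies VGD. -/
theorem generic_closure_implies_vgd [Nonempty S] [Nonempty A]
    (M : MDP S A) (PC : Set (S → A → ℝ)) (π πplus πstar : S → A → ℝ)
    (v : S → A → ℝ) (Qhat : S → A → ℝ)
    (epsgreedy epsapprox Cv : ℝ)
    (hpol : ∀ π' ∈ PC, IsPolicy π')
    (hπ : π ∈ PC) (hπplus : πplus ∈ PC)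
    (hv : (∀ s a, 0 < v s a) ∧ ∑ s, ∑ a, v s a = 1)
    (hstar : IsPolicy πstar ∧ ∀ π', IsPolicy π' → M.value πstar ≤ M.value π')
    (hocc : ∀ s, 0 < M.occ π s)
    -- (i) approximate greedification
    (hgreedy : ∑ s, M.occ π s * innerA (Qhat s) (πplus s) ≤
      ∑ s, M.occ π s * (⨅ a, Qhat s a) + epsgreedy)
    -- (ii) critic approximation error under v
    (happrox : ∑ s, ∑ a, v s a * (Qhat s a - M.Qfun π s a) ^ 2 ≤ epsapprox)
    -- (iii) v-concentrability
    (hconc : ∀ πt ∈ ({π, πplus, πstar} : Set (S → A → ℝ)),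
      ∀ μt ∈ ({M.occ π, M.occ πstar} : Set (S → ℝ)),
        ∑ s, ∑ a, v s a * (μt s * πt s a / v s a) ^ 2 ≤ Cv) :
    M.value π - M.value πstar ≤
      (⨆ s, M.occ πstar s / M.occ π s) *
          sSup ((fun πt => innerSA (M.gradV π)
            (fun s a => π s a - πt s a)) '' PC) +
        M.horizon * (⨆ s, M.occ πstar s / M.occ π s) *
          (epsgreedy + 4 * Real.sqrt (Cv * epsapprox)) := by
  exact generic_closure_implies_vgd_general M PC π πplus πstar v Qhat epsgreedy epsapprox Cv hpol
    (hpol π hπ) hπplus hstar.1 hv.1 hocc hgreedy happrox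
    (fun p hp => hconc p (by grind) _ (by simp)) (fun p hp => hconc p (by grind) _ (by simp))
end
end

section
/- Approximate first-order optimality from the gradient mapping: let ‖·‖ be a norm and x ∈ X. Assume: (1) h : ℝ^d → ℝ is 1-strongly convex and has an L_h-Lipschitz gradient w.r.t. ‖·‖; (2) ‖ĝ(x) − ∇f(x)‖_* ≤ ε_grad; (3) max_{z,y∈X} ‖z − y‖ ≤ D; (4) ‖∇f(x)‖_* ≤ M. Then for any x⁺ ∈ T_η^{ε_opt}(x; h) and every y ∈ X: ⟨∇f(x), x − y⟩ ≤ (D + ηM) ‖G_η(x, x⁺; h)‖_* + ε_grad D + ε_opt. -/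
open scoped BigOperators

noncomputable section

/-- Standard inner product on `ℝ^d`. -/
def dotd {d : ℕ} (u v : Fin d → ℝ) : ℝ := ∑ i, u i * v i

/-- `N` is a norm on `ℝ^d`. -/
def IsNorm {d : ℕ} (N : (Fin d → ℝ) → ℝ) : Prop :=
  (∀ x, 0 ≤ N x) ∧ (∀ x, N x = 0 ↔ x = 0) ∧
    (∀ (c : ℝ) (x : Fin d → ℝ), N (c • x) = |c| * N x) ∧ ∀ x y, N (x + y) ≤ N x + N y

/-- The dual norm of `N`. -/
def dualNorm {d : ℕ} (N : (Fin d → ℝ) → ℝ) (z : Fin d → ℝ) : ℝ :=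
  sSup ((fun u => dotd z u) '' {u | N u ≤ 1})

/-- Bregman divergence of `h` whose gradient is `gh`. -/
def breg {d : ℕ} (h : (Fin d → ℝ) → ℝ) (gh : (Fin d → ℝ) → Fin d → ℝ)
    (u v : Fin d → ℝ) : ℝ :=
  h u - h v - dotd (gh v) (u - v)

/-- Bregman gradient mapping `G_η(x, x⁺; h) = (1/η)(∇h(x) − ∇h(x⁺))`. -/
def Gmap {d : ℕ} (gh : (Fin d → ℝ) → Fin d → ℝ) (η : ℝ) (x xp : Fin d → ℝ) :
    Fin d → ℝ :=
  (1 / η) • (gh x - gh xp)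

/-- The set `T_η^{εopt}(x; h)` of `εopt`-approximate Bregman proximal updates at `x`,
for gradient estimate `g = ĝ(x)`. -/
def proxSet {d : ℕ} (X : Set (Fin d → ℝ)) (g : Fin d → ℝ)
    (gh : (Fin d → ℝ) → Fin d → ℝ) (η εopt : ℝ) (x : Fin d → ℝ) :
    Set (Fin d → ℝ) :=
  {xp | xp ∈ X ∧ ∀ z ∈ X, dotd (g + (1 / η) • (gh xp - gh x)) (z - xp) ≥ -εopt}

/-!
Split `∇f(x) (x - y)` along `x⁺`. The part `∇f(x) (x - x⁺)` is at most `M ‖x - x⁺‖`, and strong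
monotonicity of `∇h` gives `‖x - x⁺‖ ≤ ‖∇h(x) - ∇h(x⁺)‖ = η ‖G‖`. The part `∇f(x) (x⁺ - y)` is
controlled by testing the variational inequality of the proximal update at `y`, which replaces
`∇f(x)` by `G` up to `ε_opt` and the gradient error.
-/

section NormedSpace

variable {E : Type*} [SeminormedAddCommGroup E] [NormedSpace ℝ E]

/-- The Bregman gradient mapping `G_η(x, x⁺)` in a normed space. The mirror map `J` plays the role
of `∇h`; it takes values in the dual space and need not be a gradient. -/
def gradientMapping (J : E → StrongDual ℝ E) (η : ℝ) (x xp : E) : StrongDual ℝ E :=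
  (1 / η) • (J x - J xp)

/-- The set of `ε`-approximate Bregman proximal updates at `x` in a normed space, for the gradient
estimate `g` and the mirror map `J`. The defining variational inequality is written with the
gradient mapping, whose sign is opposite to that of `(1 / η) • (J x⁺ - J x)`. -/
def approxProxUpdates (X : Set E) (g : StrongDual ℝ E) (J : E → StrongDual ℝ E) (η ε : ℝ) (x : E) :
    Set E :=
  {xp ∈ X | ∀ z ∈ X, -ε ≤ (g - gradientMapping J η x xp) (z - xp)}

theorem apply_le_of_norm_le {φ : StrongDual ℝ E} {u : E} {a b : ℝ} (hφ : ‖φ‖ ≤ a) (hu : ‖u‖ ≤ b) :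
    φ u ≤ a * b :=
  (le_abs_self _).trans (φ.le_of_opNorm_le_of_le hφ hu)

theorem isLUB_image_closedBall_opNorm (φ : StrongDual ℝ E) :
    IsLUB (φ '' Metric.closedBall 0 1) ‖φ‖ := by
  refine ⟨?_, fun b hb ↦ ?_⟩
  · rintro _ ⟨u, hu, rfl⟩
    simpa only [mul_one] using apply_le_of_norm_le le_rfl (mem_closedBall_zero_iff.1 hu)
  · have apply_le {u : E} (hu : u ∈ Metric.closedBall 0 1) : φ u ≤ b := hb ⟨u, hu, rfl⟩
    have bound_nonneg : 0 ≤ b := by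
      simpa only [map_zero] using apply_le (Metric.mem_closedBall_self zero_le_one)
    refine ContinuousLinearMap.opNorm_le_of_unit_norm bound_nonneg fun u hu ↦ ?_
    have apply_neg_le : φ (-u) ≤ b := apply_le (by simp [hu])
    exact abs_le'.2 ⟨apply_le (by simp [hu]), by simpa only [map_neg] using apply_neg_le⟩

theorem norm_sub_le_of_stronglyMonotone {J : E → StrongDual ℝ E}
    (hJ : ∀ u v, ‖u - v‖ ^ 2 ≤ (J u - J v) (u - v)) (u v : E) : ‖u - v‖ ≤ ‖J u - J v‖ := by
  have sq_le : ‖u - v‖ ^ 2 ≤ ‖J u - J v‖ * ‖u - v‖ :=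
    (hJ u v).trans (apply_le_of_norm_le le_rfl le_rfl)
  rcases (norm_nonneg (u - v)).eq_or_lt with norm_eq_zero | norm_pos
  · exact norm_eq_zero ▸ norm_nonneg _
  · exact le_of_mul_le_mul_right (by rwa [← sq]) norm_pos

theorem norm_sub_le_mul_norm_gradientMapping {J : E → StrongDual ℝ E}
    (hJ : ∀ u v, ‖u - v‖ ^ 2 ≤ (J u - J v) (u - v)) {η : ℝ} (hη : 0 < η) (x xp : E) :
    ‖x - xp‖ ≤ η * ‖gradientMapping J η x xp‖ :=
  calc
    ‖x - xp‖ ≤ ‖J x - J xp‖ := norm_sub_le_of_stronglyMonotone hJ x xp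
    _ = η * ‖gradientMapping J η x xp‖ := by
      rw [gradientMapping, norm_smul, Real.norm_of_nonneg (by positivity), ← mul_assoc,
        mul_one_div_cancel hη.ne', one_mul]

theorem prox_approx_optimality_general {X : Set E} {f' g : StrongDual ℝ E}
    {J : E → StrongDual ℝ E} {η εgrad εopt D M : ℝ} {x xp : E} (hη : 0 < η)
    (hJ : ∀ u v, ‖u - v‖ ^ 2 ≤ (J u - J v) (u - v)) (hg : ‖g - f'‖ ≤ εgrad)
    (hD : ∀ z ∈ X, ∀ y ∈ X, ‖z - y‖ ≤ D) (hM : ‖f'‖ ≤ M)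
    (hxp : xp ∈ approxProxUpdates X g J η εopt x) :
    ∀ y ∈ X, f' (x - y) ≤
      (D + η * M) * ‖gradientMapping J η x xp‖ + εgrad * D + εopt := by
  intro y hy
  obtain ⟨hxpX, hopt⟩ := hxp
  set G := gradientMapping J η x xp
  have step_le : f' (x - xp) ≤ M * (η * ‖G‖) :=
    apply_le_of_norm_le hM (norm_sub_le_mul_norm_gradientMapping hJ hη x xp)
  have mapping_le : G (xp - y) ≤ ‖G‖ * D := apply_le_of_norm_le le_rfl (hD xp hxpX y hy)
  have error_le : (g - f') (y - xp) ≤ εgrad * D := apply_le_of_norm_le hg (hD y hy xp hxpX)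
  calc
    f' (x - y) = f' (x - xp) + G (xp - y) + (g - f') (y - xp) - (g - G) (y - xp) := by
      simp only [map_sub, sub_apply]
      ring
    _ ≤ M * (η * ‖G‖) + ‖G‖ * D + εgrad * D - -εopt := by gcongr; exact hopt y hy
    _ = (D + η * M) * ‖G‖ + εgrad * D + εopt := by ring

end NormedSpace

section Bregman

variable {d : ℕ}

theorem dotd_eq_dotProduct (u v : Fin d → ℝ) : dotd u v = u ⬝ᵥ v := rfl

theorem breg_add_breg_comm (h : (Fin d → ℝ) → ℝ) (gh : (Fin d → ℝ) → Fin d → ℝ)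
    (u v : Fin d → ℝ) : breg h gh u v + breg h gh v u = dotd (gh u - gh v) (u - v) := by
  simp only [breg, dotd_eq_dotProduct, sub_dotProduct, dotProduct_sub]
  ring

end Bregman

namespace IsNorm

variable {d : ℕ} {N : (Fin d → ℝ) → ℝ}

/-- The vector space `ℝ^d` normed by `N`. It is a type synonym because `Fin d → ℝ` already carries
the supremum norm. -/
def Space (_hN : IsNorm N) : Type := Fin d → ℝ

instance (hN : IsNorm N) : AddCommGroup hN.Space := inferInstanceAs (AddCommGroup (Fin d → ℝ))

instance (hN : IsNorm N) : Module ℝ hN.Space := inferInstanceAs (Module ℝ (Fin d → ℝ))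

instance (hN : IsNorm N) : Norm hN.Space := ⟨N⟩

theorem normedSpaceCore (hN : IsNorm N) : NormedSpace.Core ℝ hN.Space where
  norm_nonneg := hN.1
  norm_smul := hN.2.2.1
  norm_triangle := hN.2.2.2
  norm_eq_zero_iff := hN.2.1

instance (hN : IsNorm N) : NormedAddCommGroup hN.Space := .ofCore hN.normedSpaceCore

instance (hN : IsNorm N) : NormedSpace ℝ hN.Space := .ofCore hN.normedSpaceCore

instance (hN : IsNorm N) : FiniteDimensional ℝ hN.Space :=
  inferInstanceAs (FiniteDimensional ℝ (Fin d → ℝ))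

/-- The identity map from the type synonym `hN.Space` to `ℝ^d`. -/
def equiv (hN : IsNorm N) : hN.Space ≃ₗ[ℝ] (Fin d → ℝ) := LinearEquiv.refl ℝ (Fin d → ℝ)

theorem norm_eq (hN : IsNorm N) (u : hN.Space) : ‖u‖ = N (hN.equiv u) := rfl

/-- The map sending `z` to the functional `dotd z` on `ℝ^d` normed by `N`, through which
gradient vectors become elements of the dual space. -/
def dotDual (hN : IsNorm N) : (Fin d → ℝ) →ₗ[ℝ] StrongDual ℝ hN.Space :=
  LinearMap.toContinuousLinearMap.toLinearMap ∘ₗ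
    (dotProductBilin ℝ ℝ).compl₂ hN.equiv.toLinearMap

theorem dotDual_apply (hN : IsNorm N) (z : Fin d → ℝ) (u : hN.Space) :
    hN.dotDual z u = dotd z (hN.equiv u) := rfl

theorem norm_dotDual (hN : IsNorm N) (z : Fin d → ℝ) : ‖hN.dotDual z‖ = dualNorm N z := by
  have image_eq :
      hN.dotDual z '' Metric.closedBall 0 1 = (fun u ↦ dotd z u) '' {u | N u ≤ 1} := by
    ext r
    simp only [Set.mem_image, mem_closedBall_zero_iff, Set.mem_ofPred_eq, norm_eq, dotDual_apply,
      hN.equiv.surjective.exists]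
  have isLUB := isLUB_image_closedBall_opNorm (hN.dotDual z)
  rw [dualNorm, ← image_eq, isLUB.csSup_eq isLUB.nonempty]

theorem sq_norm_sub_le_dotDual_of_breg (hN : IsNorm N) {h : (Fin d → ℝ) → ℝ}
    {gh : (Fin d → ℝ) → Fin d → ℝ} (hsc : ∀ u v, breg h gh u v ≥ (1 / 2) * (N (u - v)) ^ 2)
    (u v : hN.Space) :
    ‖u - v‖ ^ 2 ≤ (hN.dotDual (gh (hN.equiv u)) - hN.dotDual (gh (hN.equiv v))) (u - v) := by
  have le_breg (u v : hN.Space) : 1 / 2 * ‖u - v‖ ^ 2 ≤ breg h gh (hN.equiv u) (hN.equiv v) := by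
    simpa only [norm_eq, map_sub] using hsc (hN.equiv u) (hN.equiv v)
  have le_breg_swap := norm_sub_rev v u ▸ le_breg v u
  rw [← map_sub, dotDual_apply, map_sub, ← breg_add_breg_comm h]
  linarith [le_breg u v]

theorem gradientMapping_dotDual (hN : IsNorm N) (gh : (Fin d → ℝ) → Fin d → ℝ) (η : ℝ)
    (x xp : hN.Space) :
    gradientMapping (hN.dotDual ∘ gh ∘ hN.equiv) η x xp =
      hN.dotDual (Gmap gh η (hN.equiv x) (hN.equiv xp)) := by
  simp only [gradientMapping, Gmap, map_smul, map_sub, Function.comp_apply]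

theorem approxProxUpdates_dotDual (hN : IsNorm N) (X : Set (Fin d → ℝ)) (g : Fin d → ℝ)
    (gh : (Fin d → ℝ) → Fin d → ℝ) (η ε : ℝ) (x : hN.Space) :
    approxProxUpdates (hN.equiv ⁻¹' X) (hN.dotDual g) (hN.dotDual ∘ gh ∘ hN.equiv) η ε x =
      hN.equiv ⁻¹' proxSet X g gh η ε (hN.equiv x) := by
  have sub_Gmap (u v : Fin d → ℝ) : g - Gmap gh η u v = g + (1 / η) • (gh v - gh u) := by
    rw [Gmap, sub_eq_add_neg, ← smul_neg, neg_sub]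
  ext xp
  simp only [approxProxUpdates, proxSet, gradientMapping_dotDual, ← map_sub hN.dotDual, sub_Gmap,
    dotDual_apply, map_sub hN.equiv, Set.mem_preimage, Set.mem_ofPred_eq, ge_iff_le,
    hN.equiv.surjective.forall]

end IsNorm

/-- Lemma: approximate first-order optimality
from the gradient mapping. -/
theorem prox_approx_optimality (d : ℕ) (X : Set (Fin d → ℝ))
    (f : (Fin d → ℝ) → ℝ) (gradf ghat : (Fin d → ℝ) → Fin d → ℝ)
    (N : (Fin d → ℝ) → ℝ) (h : (Fin d → ℝ) → ℝ) (gh : (Fin d → ℝ) → Fin d → ℝ)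
    (eta Lh epsgrad epsopt D Mb : ℝ) (x xp : Fin d → ℝ)
    (hX : Convex ℝ X) (hNorm : IsNorm N) (hx : x ∈ X)
    (heta : 0 < eta)
    (hsc : ∀ u v, breg h gh u v ≥ (1 / 2) * (N (u - v)) ^ 2)
    (hLip : ∀ u v, dualNorm N (gh u - gh v) ≤ Lh * N (u - v))
    (hg : dualNorm N (ghat x - gradf x) ≤ epsgrad)
    (hD : ∀ z ∈ X, ∀ y ∈ X, N (z - y) ≤ D)
    (hM : dualNorm N (gradf x) ≤ Mb)
    (hxp : xp ∈ proxSet X (ghat x) gh eta epsopt x) :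
    ∀ y ∈ X, dotd (gradf x) (x - y) ≤
      (D + eta * Mb) * dualNorm N (Gmap gh eta x xp) + epsgrad * D + epsopt := by
  obtain ⟨x, rfl⟩ := hNorm.equiv.surjective x
  obtain ⟨xp, rfl⟩ := hNorm.equiv.surjective xp
  rw [← Set.mem_preimage, ← hNorm.approxProxUpdates_dotDual] at hxp
  simp only [hNorm.equiv.surjective.forall, ← map_sub hNorm.equiv, ← hNorm.norm_eq,
    ← hNorm.norm_dotDual, ← hNorm.dotDual_apply, ← hNorm.gradientMapping_dotDual,
    map_sub hNorm.dotDual] at hg hD hM ⊢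
  exact prox_approx_optimality_general heta (hNorm.sq_norm_sub_le_dotDual_of_breg hsc) hg hD hM hxp
end
end
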